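/- Let K be a commutative ring, d ≥ 1, and for j = 0,…,d−1 let n_j be a natural number and A_j, D_j ∈ K^{n_j × n_{j+1 mod d}}. For tuples P = (P_0,…,P_{d−1}) with P_j ∈ 𝒫_{n_j} and Q = (Q_0,…,Q_{d−1}) with Q_j ∈ 𝒬_{n_j}, define the n_0 × n_0 matrix M(P,Q) = ∏_{j=0}^{d−1} ((Q_j P_j) A_j (Q_{j+1 mod d} P_{j+1 mod d})^{-1} + D_j). Write det[xI + A_0⋯A_{d−1}] = ∑_{i=0}^{n_0} x^{n_0−i} p_i, det[xI + D_0⋯D_{d−1}] = ∑_{i=0}^{n_0} x^{n_0−i} q_i, and ∑_{P,Q} det[xI + M(P,Q)] = ∑_{i=0}^{n_0} x^{n_0−i} r_i as polynomials in K[x]. Then for all 0 ≤ k ≤ n_0 with k ≤ n_j for all j, r_k = (1+1)^{n_0+⋯+n_{d−1}} · ∑_{i=0}^{k} (∏_{j=0}^{d−1} (n_j−k+i)!·(n_j−i)!/(n_j−k)!) · p_i · q_{k−i}, where each quotient of factorials is a natural number cast into K. -/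

import Mathlib

/-- `[A]_{S,T}`: the determinant of the submatrix of `A` with rows indexed by `S` and
columns indexed by `T`, both taken in increasing order. -/
def minorDet {K : Type} [CommRing K] {m p : ℕ} (A : Matrix (Fin m) (Fin p) K)
    (S : Finset (Fin m)) (T : Finset (Fin p)) : K :=
  if h : T.card = S.card then (A.submatrix (S.orderEmbOfFin rfl) (T.orderEmbOfFin h)).det else 0

/-- Reindex the rows of a matrix along an equality of dimensions. -/
def rowCast {K : Type} [CommRing K] {a b p : ℕ} (h : a = b) (M : Matrix (Fin a) (Fin p) K) :
    Matrix (Fin b) (Fin p) K :=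
  M.submatrix (Fin.cast h.symm) id

/-- Reindex the columns of a matrix along an equality of dimensions. -/
def colCast {K : Type} [CommRing K] {m a b : ℕ} (h : a = b) (M : Matrix (Fin m) (Fin a) K) :
    Matrix (Fin m) (Fin b) K :=
  M.submatrix id (Fin.cast h.symm)

open Fin.NatCast in
/-- Partial products `A_0 * A_1 * ⋯ * A_{m-1}` of a cyclic family of matrices
`A j : Matrix (Fin (n j)) (Fin (n (j+1))) K` for `j : Fin d`. -/
def cycProdAux {K : Type} [CommRing K] {d : ℕ} [NeZero d] {n : Fin d → ℕ}
    (A : ∀ j : Fin d, Matrix (Fin (n j)) (Fin (n (j + 1))) K) :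
    (m : ℕ) → Matrix (Fin (n 0)) (Fin (n (m : Fin d))) K
  | 0 => colCast (congrArg n (by simp)) (1 : Matrix (Fin (n 0)) (Fin (n 0)) K)
  | m + 1 => colCast (congrArg n (by push_cast; ring))
      (cycProdAux A m * A ((m : ℕ) : Fin d))

/-- The cyclic product `A_0 * A_1 * ⋯ * A_{d-1}`, an `n 0 × n 0` matrix. -/
def cycProd {K : Type} [CommRing K] {d : ℕ} [NeZero d] {n : Fin d → ℕ}
    (A : ∀ j : Fin d, Matrix (Fin (n j)) (Fin (n (j + 1))) K) :
    Matrix (Fin (n 0)) (Fin (n 0)) K :=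
  colCast (congrArg n (by simp)) (cycProdAux A d)

/-- `[A]^{(k)}`: the sum of all principal `k × k` minors of `A`. -/
def minorSum {K : Type} [CommRing K] {m : ℕ} (A : Matrix (Fin m) (Fin m) K) (k : ℕ) : K :=
  ∑ S ∈ Finset.powersetCard k (Finset.univ : Finset (Fin m)), minorDet A S S

/-- The sign matrix (diagonal matrix with entries `±1`) determined by a choice of signs `ε`. -/
def signMatrix {m : ℕ} (K : Type) [CommRing K] (ε : Fin m → Bool) : Matrix (Fin m) (Fin m) K :=
  Matrix.diagonal (fun i => if ε i then 1 else -1)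

/-- `det[xI + A]` as a polynomial in `K[x]`. -/
noncomputable def detXIplus {K : Type} [CommRing K] {m : ℕ} (A : Matrix (Fin m) (Fin m) K) : Polynomial K :=
  ((Polynomial.X : Polynomial K) • (1 : Matrix (Fin m) (Fin m) (Polynomial K)) +
    A.map Polynomial.C).det



open Finset

/-- Matrix `M` on `S`, identity off `S`. -/
def pmMat {ι R : Type*} [Fintype ι] [DecidableEq ι] [CommRing R] (M : Matrix ι ι R)
    (S : Finset ι) : Matrix ι ι R :=
  Matrix.of fun a b => if a ∈ S then (if b ∈ S then M a b else 0) else if a = b then 1 else 0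

/-- Principal minor. -/
def pm {ι R : Type*} [Fintype ι] [DecidableEq ι] [CommRing R] (M : Matrix ι ι R)
    (S : Finset ι) : R := (pmMat M S).det

lemma det_add_piecewise {ι R : Type*} [Fintype ι] [DecidableEq ι] [CommRing R]
    (M N : Matrix ι ι R) :
    (M + N).det = ∑ U : Finset ι, Matrix.det (Matrix.of fun a b => if a ∈ U then M a b else N a b) := by
  have h := (Matrix.detRowAlternating (R := R) (n := ι)).toMultilinearMap.map_add_univ M N
  refine h.trans (Finset.sum_congr rfl fun U _ => ?_)
  change Matrix.det _ = Matrix.det _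
  congr 1
  ext a b
  by_cases h : a ∈ U <;> simp [Finset.piecewise, h]

lemma det_diag_add {ι R : Type*} [Fintype ι] [DecidableEq ι] [CommRing R]
    (M : Matrix ι ι R) (x : ι → R) :
    (M + Matrix.diagonal x).det = ∑ S : Finset ι, (∏ a, if a ∈ S then 1 else x a) * pm M S := by
  rw [det_add_piecewise]
  refine Finset.sum_congr rfl fun S _ => ?_
  rw [pm, Matrix.det_apply', Matrix.det_apply', Finset.mul_sum]
  refine Finset.sum_congr rfl fun σ _ => ?_
  rw [mul_left_comm]
  congr 1
  rw [← Equiv.prod_comp σ (fun a => if a ∈ S then (1:R) else x a), ← Finset.prod_mul_distrib]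
  by_cases h : ∀ i, σ i ∉ S → σ i = i
  · refine Finset.prod_congr rfl fun i _ => ?_
    by_cases hi : σ i ∈ S
    · have : i ∈ S := by
        by_contra hc
        have h1 := h (σ.symm i) (by simpa using hc)
        simp at h1
        rw [Equiv.eq_symm_apply] at h1
        exact hc (h1 ▸ hi)
      simp [pmMat, hi, this]
    · have := h i hi
      simp only [hi, if_false, pmMat, Matrix.of_apply]
      rw [this]
      simp
  · push Not at h
    obtain ⟨i, hi, hne⟩ := h
    rw [Finset.prod_eq_zero (Finset.mem_univ i), Finset.prod_eq_zero (Finset.mem_univ i)]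
    · simp [pmMat, hi, hne]
    · simp [hi, hne]

lemma pm_mul {ι R : Type*} [Fintype ι] [DecidableEq ι] [CommRing R]
    (A D : Matrix ι ι R) (U S : Finset ι) (_hU : U ⊆ S) :
    Matrix.det (Matrix.of fun a b => if a ∈ U then (if b ∈ U then A a b else 0)
      else (if b ∈ U then 0 else pmMat D S a b)) = pm A U * pm D (S \ U) := by
  rw [pm, pm, ← Matrix.det_mul]
  congr 1
  ext a b
  rw [Matrix.mul_apply]
  by_cases ha : a ∈ U
  · have : ∀ c, pmMat A U a c * pmMat D (S \ U) c b
        = if c = b then (if b ∈ U then A a b else 0) else 0 := by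
      intro c
      by_cases hc : c ∈ U
      · by_cases hcb : c = b
        · subst hcb; simp [pmMat, ha, hc]
        · simp [pmMat, ha, hc, hcb]
      · by_cases hcb : c = b
        · subst hcb; simp [pmMat, ha, hc]
        · simp [pmMat, ha, hc, hcb]
    simp [this, ha]
  · have : ∀ c, pmMat A U a c * pmMat D (S \ U) c b
        = if a = c then pmMat D (S \ U) a b else 0 := by
      intro c
      by_cases hc : a = c
      · subst hc; simp [pmMat, ha]
      · simp [pmMat, ha, hc]
    simp only [this, Finset.sum_ite_eq, Finset.mem_univ, if_true]
    by_cases hb : b ∈ U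
    · have : a ≠ b := fun h => ha (h ▸ hb)
      simp [pmMat, hb, ha, this]
    · simp [pmMat, hb, ha]

/-- sign of a boolean -/
def sg (R : Type*) [CommRing R] (b : Bool) : R := if b then 1 else -1

lemma sum_sign {ι R : Type*} [Fintype ι] [DecidableEq ι] [CommRing R]
    (U : Finset ι) (σ : Equiv.Perm ι) :
    ∑ ε : ι → Bool, ∏ i, (if σ i ∈ U then sg R (ε (σ i)) * sg R (ε i) else 1) =
      if ∀ i, (i ∈ U ↔ σ i ∈ U) then (1 + 1 : R) ^ (Fintype.card ι) else 0 := by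
  have h1 : ∀ ε : ι → Bool, ∏ i, (if σ i ∈ U then sg R (ε (σ i)) * sg R (ε i) else 1) =
      ∏ i, (if i ∈ U then sg R (ε i) else 1) * (if σ i ∈ U then sg R (ε i) else 1) := by
    intro ε
    rw [Finset.prod_mul_distrib,
      ← Equiv.prod_comp σ (fun i => if i ∈ U then sg R (ε i) else 1), ← Finset.prod_mul_distrib]
    refine Finset.prod_congr rfl fun i _ => ?_
    split_ifs <;> simp only [mul_one]
  simp only [h1]
  have h2 := (Finset.prod_univ_sum (fun _ : ι => (Finset.univ : Finset Bool))
    (fun i b => (if i ∈ U then sg R b else 1) * (if σ i ∈ U then sg R b else 1))).symm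
  rw [Fintype.piFinset_univ] at h2
  rw [h2]
  split_ifs with h
  · rw [Finset.prod_congr rfl (g := fun _ => (1 + 1 : R))]
    · simp
    · intro i _
      by_cases hi : i ∈ U
      · simp [hi, (h i).1 hi, sg]
      · simp [hi, (h i).not.1 hi]
        norm_num
  · push Not at h
    obtain ⟨i, hi⟩ := h
    refine Finset.prod_eq_zero (Finset.mem_univ i) ?_
    rcases hi with ⟨h1, h2⟩ | ⟨h1, h2⟩ <;> simp [h1, h2, sg]

lemma sign_avg {ι R : Type*} [Fintype ι] [DecidableEq ι] [CommRing R]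
    (A D : Matrix ι ι R) (S : Finset ι) :
    ∑ ε : ι → Bool, pm (Matrix.of fun a b => sg R (ε a) * A a b * sg R (ε b) + D a b) S =
      (1 + 1 : R) ^ (Fintype.card ι) * ∑ U ∈ S.powerset, pm A U * pm D (S \ U) := by
  have h1 : ∀ ε : ι → Bool, pm (Matrix.of fun a b => sg R (ε a) * A a b * sg R (ε b) + D a b) S =
      ∑ U : Finset ι, Matrix.det (Matrix.of fun a b => if a ∈ U then
        (if a ∈ S ∧ b ∈ S then sg R (ε a) * A a b * sg R (ε b) else 0) else pmMat D S a b) := by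
    intro ε
    refine Eq.trans ?_ (det_add_piecewise (Matrix.of fun a b =>
      (if a ∈ S ∧ b ∈ S then sg R (ε a) * A a b * sg R (ε b) else 0)) (pmMat D S))
    rw [pm]
    congr 1
    ext a b
    by_cases ha : a ∈ S <;> by_cases hb : b ∈ S <;> simp [pmMat, ha, hb]
  simp only [h1]
  rw [Finset.sum_comm, Finset.mul_sum]
  have h2 : ∀ U : Finset ι, (∑ ε : ι → Bool, Matrix.det (Matrix.of fun a b => if a ∈ U then
        (if a ∈ S ∧ b ∈ S then sg R (ε a) * A a b * sg R (ε b) else 0) else pmMat D S a b)) =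
      (1 + 1 : R) ^ (Fintype.card ι) * Matrix.det (Matrix.of fun a b => if a ∈ U then
        (if b ∈ U then (if a ∈ S ∧ b ∈ S then A a b else 0) else 0)
        else (if b ∈ U then 0 else pmMat D S a b)) := by
    intro U
    simp only [Matrix.det_apply', Matrix.of_apply]
    rw [Finset.sum_comm, Finset.mul_sum]
    refine Finset.sum_congr rfl fun σ _ => ?_
    rw [← Finset.mul_sum, mul_left_comm]
    congr 1
    have h3 : ∀ ε : ι → Bool, ∏ i, (if σ i ∈ U then
        (if σ i ∈ S ∧ i ∈ S then sg R (ε (σ i)) * A (σ i) i * sg R (ε i) else 0)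
          else pmMat D S (σ i) i) =
        (∏ i, (if σ i ∈ U then sg R (ε (σ i)) * sg R (ε i) else 1)) *
        ∏ i, (if σ i ∈ U then (if σ i ∈ S ∧ i ∈ S then A (σ i) i else 0)
          else pmMat D S (σ i) i) := by
      intro ε
      rw [← Finset.prod_mul_distrib]
      refine Finset.prod_congr rfl fun i _ => ?_
      split_ifs <;> ring
    simp only [h3]
    rw [← Finset.sum_mul, sum_sign]
    split_ifs with h
    · congr 1
      refine Finset.prod_congr rfl fun i _ => ?_
      simp only [← h i]
      split_ifs <;> rfl
    · push Not at h
      obtain ⟨i, hi⟩ := h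
      have h4 : ∏ i, (if σ i ∈ U then (if i ∈ U then (if σ i ∈ S ∧ i ∈ S then A (σ i) i else 0)
          else 0) else if i ∈ U then 0 else pmMat D S (σ i) i) = 0 := by
        refine Finset.prod_eq_zero (i := i) (Finset.mem_univ i) ?_
        rcases hi with ⟨h1, h2⟩ | ⟨h1, h2⟩ <;> simp [h1, h2]
      rw [h4]; simp
  simp only [h2]
  symm
  refine Finset.sum_subset_zero_on_sdiff (Finset.subset_univ _) ?_ ?_
  · intro U hU
    simp at hU
    obtain ⟨a, ha, haS⟩ := Finset.not_subset.1 hU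
    rw [Matrix.det_eq_zero_of_row_eq_zero a]
    · simp
    · intro b; simp [ha, haS]
  · intro U hU
    rw [Finset.mem_powerset] at hU
    rw [← pm_mul A D U S hU]
    congr 2
    ext a b
    by_cases ha : a ∈ U
    · by_cases hb : b ∈ U
      · simp [ha, hb, hU ha, hU hb]
      · simp [ha, hb]
    · simp [ha]

lemma pm_perm {ι R : Type*} [Fintype ι] [DecidableEq ι] [CommRing R]
    (A : Matrix ι ι R) (π : Equiv.Perm ι) (U : Finset ι) :
    pm (Matrix.of fun a b => A (π a) (π b)) U = pm A (U.map π.toEmbedding) := by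
  rw [pm, pm, ← Matrix.det_submatrix_equiv_self π (pmMat A _)]
  congr 1
  ext a b
  simp [pmMat]

lemma perm_count {α : Type*} [Fintype α] [DecidableEq α] (V W : Finset α)
    (h : V.card + W.card ≤ Fintype.card α) :
    (univ.filter fun π : Equiv.Perm α => ∀ w ∈ W, π w ∉ V).card *
      (Fintype.card α - V.card - W.card).factorial =
      (Fintype.card α - V.card).factorial * (Fintype.card α - W.card).factorial := by
  induction W using Finset.induction_on with
  | empty => simp [Fintype.card_perm, mul_comm]
  | insert w0 W hw ih =>
    rw [Finset.card_insert_of_notMem hw] at h ⊢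
    specialize ih (by omega)
    set F := univ.filter fun π : Equiv.Perm α => ∀ w ∈ W, π w ∉ V with hF
    have key : ∀ w1, w1 ∉ W → (F.filter fun π => π w1 ∉ V).card =
        (univ.filter fun π : Equiv.Perm α => ∀ w ∈ insert w0 W, π w ∉ V).card := by
      intro w1 hw1
      refine Finset.card_bij (fun π _ => π * Equiv.swap w0 w1) ?_ ?_ ?_
      · intro π hπ
        simp [hF] at hπ ⊢
        refine ⟨hπ.2, fun w hwW => ?_⟩
        rw [Equiv.swap_apply_of_ne_of_ne (by rintro rfl; exact hw hwW)
          (by rintro rfl; exact hw1 hwW)]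
        exact hπ.1 w hwW
      · intro a _ b _ hab
        simpa using hab
      · intro π hπ
        refine ⟨π * Equiv.swap w0 w1, ?_, by simp [mul_assoc]⟩
        simp [hF] at hπ ⊢
        refine ⟨fun w hwW => ?_, hπ.1⟩
        rw [Equiv.swap_apply_of_ne_of_ne (by rintro rfl; exact hw hwW)
          (by rintro rfl; exact hw1 hwW)]
        exact hπ.2 w hwW
    have dc : ∑ w1 ∈ Wᶜ, (F.filter fun π => π w1 ∉ V).card =
        ∑ π ∈ F, (Wᶜ.filter fun w1 => π w1 ∉ V).card := by
      simp only [Finset.card_filter]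
      rw [Finset.sum_comm]
    rw [Finset.sum_congr rfl (fun w1 h1 => key w1 (by simpa using h1)),
      Finset.sum_const, Finset.card_compl] at dc
    have each : ∀ π ∈ F, (Wᶜ.filter fun w1 => π w1 ∉ V).card =
        Fintype.card α - V.card - W.card := by
      intro π hπ
      simp [hF] at hπ
      have : (Wᶜ.filter fun w1 => π w1 ∉ V) = (V.map π.symm.toEmbedding ∪ W)ᶜ := by
        ext x
        simp [and_comm]
      rw [this, Finset.card_compl, Finset.card_union_of_disjoint, Finset.card_map]
      · omega
      · rw [Finset.disjoint_left]
        intro x hx hxW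
        simp at hx
        exact hπ x hxW hx
    rw [Finset.sum_congr rfl each, Finset.sum_const, smul_eq_mul, smul_eq_mul] at dc
    set G := (univ.filter fun π : Equiv.Perm α => ∀ w ∈ insert w0 W, π w ∉ V).card
    obtain ⟨m, hm⟩ : ∃ m, Fintype.card α - V.card - W.card = m + 1 :=
      ⟨Fintype.card α - V.card - W.card - 1, by omega⟩
    obtain ⟨l, hl⟩ : ∃ m, Fintype.card α - W.card = m + 1 :=
      ⟨Fintype.card α - W.card - 1, by omega⟩
    have e1 : Fintype.card α - V.card - (W.card + 1) = m := by omega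
    have e2 : Fintype.card α - (W.card + 1) = l := by omega
    rw [e1, e2]
    rw [hm, hl, Nat.factorial_succ, Nat.factorial_succ] at ih
    rw [hm, hl] at dc
    refine Nat.eq_of_mul_eq_mul_left (Nat.succ_pos l) ?_
    calc (l + 1) * (G * m.factorial) = ((l + 1) * G) * m.factorial := by ring
      _ = F.card * ((m + 1) * m.factorial) := by rw [dc]; ring
      _ = _ := by rw [ih, Nat.succ_eq_add_one]; ring

lemma blockTri_det_congr {ι R : Type*} [Fintype ι] [DecidableEq ι] [CommRing R]
    (M N : Matrix ι ι R) (b : ι → ℕ) (hM : M.BlockTriangular b) (hN : N.BlockTriangular b)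
    (h : ∀ i j, b i = b j → M i j = N i j) : M.det = N.det := by
  rw [hM.det, hN.det]
  refine Finset.prod_congr rfl fun k _ => ?_
  congr 1
  ext i j
  simp only [Matrix.toSquareBlock_def, Matrix.of_apply]
  exact h _ _ (i.2.trans j.2.symm)

open Fin.NatCast in
lemma grade_pow {ι R : Type*} [Fintype ι] [DecidableEq ι] [CommRing R] {d : ℕ} [NeZero d]
    (g : ι → Fin d) (T : Matrix ι ι R) (hT : ∀ a b, g b ≠ g a + 1 → T a b = 0) (m : ℕ) :
    ∀ a b, g b ≠ g a + (m : Fin d) → (T ^ m) a b = 0 := by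
  induction m with
  | zero =>
    intro a b h
    simp at h
    rw [pow_zero, Matrix.one_apply_ne]
    rintro rfl; exact h rfl
  | succ m ih =>
    intro a b h
    rw [pow_succ, Matrix.mul_apply]
    refine Finset.sum_eq_zero fun c _ => ?_
    by_cases hc : g c = g a + (m : Fin d)
    · rw [hT c b, mul_zero]
      rw [hc]
      intro h2
      apply h
      rw [h2]
      push_cast
      rw [add_assoc]
    · rw [ih a c hc, zero_mul]

lemma fin_succ_val {d : ℕ} [NeZero d] (j : Fin d) (h : j + 1 ≠ 0) : (j + 1).val = j.val + 1 := by
  have h1 : (j + 1).val = (j.val + 1) % d := by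
    rw [Fin.val_add, Fin.val_one', Nat.add_mod_mod]
  have h2 : j.val + 1 ≠ d := by
    intro h3
    apply h
    apply Fin.ext
    rw [h1, h3]; simp
  rw [h1, Nat.mod_eq_of_lt]
  have := j.2
  omega

open Fin.NatCast in
lemma link_abs {ι R : Type*} [Fintype ι] [DecidableEq ι] [CommRing R] {d : ℕ} [NeZero d]
    (g : ι → Fin d) (T : Matrix ι ι R) (hT : ∀ a b, g b ≠ g a + 1 → T a b = 0) (x : R) :
    (T + Matrix.diagonal (fun a => if g a = 0 then x else -1)).det =
      (∏ a, if g a = 0 then 1 else (-1 : R)) *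
        pm (T ^ d + Matrix.diagonal (fun _ => x)) (univ.filter fun a => g a = 0) := by
  have hd : 0 < d := NeZero.pos d
  have hTp := grade_pow g T hT
  have hz : ∀ l : ℕ, 0 < l → l < d → ((l : Fin d) ≠ 0) := by
    intro l h1 h2 h3
    rw [Fin.natCast_eq_zero] at h3
    exact absurd (Nat.le_of_dvd h1 h3) (by omega)
  have hdd : ((d : ℕ) : Fin d) = 0 := by simp
  have hsum0 : ∀ a b, g a = 0 → g b = 0 → ∑ l ∈ range d, (T ^ l) a b = if a = b then 1 else 0 := by
    intro a b ha hb
    rw [Finset.sum_eq_single_of_mem 0 (by simpa using hd)]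
    · simp [Matrix.one_apply]
    · intro l hl hl0
      apply hTp
      rw [ha, hb, zero_add]
      exact (hz l (Nat.pos_of_ne_zero hl0) (by simpa using hl)).symm
  have hsum1 : ∀ a b, g a = 0 → g b = 0 → ∑ l ∈ range d, (T ^ (l + 1)) a b = (T ^ d) a b := by
    intro a b ha hb
    rw [Finset.sum_eq_single_of_mem (d - 1) (by simp; omega)]
    · rw [Nat.sub_add_cancel hd]
    · intro l hl hl0
      apply hTp
      rw [ha, hb, zero_add]
      simp at hl
      exact (hz (l + 1) (by omega) (by omega)).symm
  let W : Matrix ι ι R := Matrix.of fun a b =>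
    if g a = 0 then ∑ l ∈ range d, (T ^ l) a b else if a = b then 1 else 0
  have hW : W.det = 1 := by
    rw [← Matrix.det_one (n := ι) (R := R)]
    refine blockTri_det_congr _ _ (fun a => (g a).val) ?_ ?_ ?_
    · intro i j hij
      have h1 : g i ≠ 0 := by
        intro h; simp [h] at hij
      have h2 : i ≠ j := by rintro rfl; simp at hij
      simp [W, h1, h2]
    · exact Matrix.blockTriangular_one
    · intro i j hij
      have hij' : g i = g j := Fin.ext hij
      by_cases h : g i = 0
      · simp only [W, Matrix.of_apply, h, if_true]
        rw [hsum0 i j h (hij' ▸ h), Matrix.one_apply]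
      · simp [W, h, Matrix.one_apply]
  let G : Matrix ι ι R := Matrix.of fun a b =>
    if g a = 0 then (if g b = 0 then (T ^ d) a b + (if a = b then x else 0) else 0)
    else T a b + (if a = b then -1 else 0)
  have hWG : W * (T + Matrix.diagonal (fun a => if g a = 0 then x else -1)) = G := by
    ext a b
    rw [mul_add, Matrix.add_apply, Matrix.mul_diagonal]
    by_cases ha : g a = 0
    · have e1 : (W * T) a b = ∑ l ∈ range d, (T ^ (l + 1)) a b := by
        rw [Matrix.mul_apply]
        simp only [W, Matrix.of_apply, ha, if_true, Finset.sum_mul]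
        rw [Finset.sum_comm]
        refine Finset.sum_congr rfl fun l _ => ?_
        rw [pow_succ, Matrix.mul_apply]
      have e2 : W a b = ∑ l ∈ range d, (T ^ l) a b := by simp [W, ha]
      rw [e1, e2]
      by_cases hb : g b = 0
      · rw [hsum0 a b ha hb, hsum1 a b ha hb]
        simp [G, ha, hb]
      · simp only [G, Matrix.of_apply, ha, hb, if_true, if_false]
        rw [mul_neg_one, ← sub_eq_add_neg, ← Finset.sum_sub_distrib,
          Finset.sum_range_sub (fun l => (T ^ l) a b), hTp d a b, hTp 0 a b, sub_zero]
        · simpa [ha] using hb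
        · rw [hdd]; simpa [ha] using hb
    · have e1 : (W * T) a b = T a b := by
        rw [Matrix.mul_apply]
        simp [W, ha]
      rw [e1]
      by_cases hab : a = b
      · subst hab; simp [W, G, ha]
      · simp [W, G, ha, hab]
  have hdet : (T + Matrix.diagonal (fun a => if g a = 0 then x else -1)).det = G.det := by
    rw [← hWG, Matrix.det_mul, hW, one_mul]
  rw [hdet, pm, ← Matrix.det_diagonal, ← Matrix.det_mul]
  have lt : ∀ j, (g j).val < d := fun j => (g j).2
  refine blockTri_det_congr _ _ (fun a => if g a = 0 then d else (g a).val) ?_ ?_ ?_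
  · intro i j hij
    by_cases hi : g i = 0
    · have hj : g j ≠ 0 := by
        intro h; simp [h, hi] at hij
      simp [G, hi, hj]
    · have hne : i ≠ j := by rintro rfl; simp at hij
      have : T i j = 0 := by
        apply hT
        intro h
        by_cases hj : g j = 0
        · simp [hi, hj] at hij
          have := lt i; omega
        · have := fin_succ_val (g i) (h ▸ hj)
          simp [hi, hj] at hij
          rw [← h] at this
          have h3 := Fin.lt_def.1 hij
          omega
      simp [G, hi, hne, this]
  · intro i j hij
    have hne : i ≠ j := by rintro rfl; simp at hij
    rw [Matrix.diagonal_mul]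
    by_cases hi : g i = 0
    · have hj : g j ≠ 0 := by
        intro h; simp [h, hi] at hij
      simp [pmMat, hi, hj]
    · simp [pmMat, hi, hne]
  · intro i j hij
    rw [Matrix.diagonal_mul]
    by_cases hi : g i = 0
    · have hj : g j = 0 := by
        by_contra h
        have := lt j
        simp [h, hi] at hij
        omega
      simp [G, pmMat, hi, hj, Matrix.diagonal_apply]
    · have hj : g j ≠ 0 := by
        intro h
        have := lt i
        simp [h, hi] at hij
        omega
      have : T i j = 0 := by
        apply hT
        intro h
        have := fin_succ_val (g i) (h ▸ hj)
        simp [hi, hj] at hij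
        rw [← h, ← hij] at this
        omega
      simp [G, pmMat, hi, this]

/-- The block cyclic matrix. -/
def bigT {K : Type} [CommRing K] {d : ℕ} [NeZero d] {n : Fin d → ℕ}
    (A : ∀ j : Fin d, Matrix (Fin (n j)) (Fin (n (j + 1))) K) :
    Matrix (Σ j : Fin d, Fin (n j)) (Σ j : Fin d, Fin (n j)) K :=
  Matrix.of fun x y => if h : y.1 = x.1 + 1 then A x.1 x.2 (Fin.cast (congrArg n h) y.2) else 0

open Fin.NatCast in
lemma cycProdAux_eq {K : Type} [CommRing K] {d : ℕ} [NeZero d] {n : Fin d → ℕ}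
    (A : ∀ j : Fin d, Matrix (Fin (n j)) (Fin (n (j + 1))) K) (m : ℕ) :
    ∀ (a : Fin (n 0)) (l : Fin d) (b : Fin (n l)) (h : l = (m : Fin d)),
      (bigT A ^ m) ⟨0, a⟩ ⟨l, b⟩ = cycProdAux A m a (Fin.cast (congrArg n h) b) := by
  induction m with
  | zero =>
    intro a l b h
    have h0 : l = 0 := by simpa using h
    subst h0
    simp only [pow_zero, cycProdAux, colCast, Matrix.submatrix_apply, id, Matrix.one_apply]
    simp
  | succ m ih =>
    intro a l b h
    have h' : l = (m : Fin d) + 1 := by rw [h]; push_cast; rfl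
    subst h'
    rw [pow_succ, Matrix.mul_apply, Fintype.sum_sigma]
    rw [Finset.sum_eq_single (m : Fin d)]
    · simp only [cycProdAux, colCast, Matrix.submatrix_apply, id, Matrix.mul_apply]
      refine Finset.sum_congr rfl fun c _ => ?_
      rw [ih a _ c rfl]
      simp [bigT]
    · intro j _ hj
      refine Finset.sum_eq_zero fun c _ => ?_
      rw [grade_pow (fun x : (Σ j : Fin d, Fin (n j)) => x.1) (bigT A) _ m, zero_mul]
      · simpa using hj
      · intro x y hxy
        simp [bigT, hxy]
    · simp

lemma cycProd_eq {K : Type} [CommRing K] {d : ℕ} [NeZero d] {n : Fin d → ℕ}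
    (A : ∀ j : Fin d, Matrix (Fin (n j)) (Fin (n (j + 1))) K) (a b : Fin (n 0)) :
    (bigT A ^ d) ⟨0, a⟩ ⟨0, b⟩ = cycProd A a b := by
  rw [cycProdAux_eq A d a 0 b (by simp)]
  rfl

lemma pm_block {K : Type} [CommRing K] {d : ℕ} [NeZero d] {n : Fin d → ℕ}
    (M : Matrix (Σ j : Fin d, Fin (n j)) (Σ j : Fin d, Fin (n j)) K) :
    pm M (univ.filter fun x => x.1 = 0) =
      Matrix.det (Matrix.of fun a b : Fin (n 0) => M ⟨0, a⟩ ⟨0, b⟩) := by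
  rw [pm, Matrix.twoBlockTriangular_det _ (fun x => x.1 = 0)]
  · have h2 : Matrix.toSquareBlockProp (pmMat M (univ.filter fun x => x.1 = 0))
        (fun x => ¬ x.1 = 0) = 1 := by
      ext x y
      have := x.2
      simp [Matrix.toSquareBlockProp, pmMat, Matrix.one_apply, Subtype.ext_iff, this]
    rw [h2, Matrix.det_one, mul_one,
      ← Matrix.det_submatrix_equiv_self (Equiv.sigmaSubtype (β := fun j => Fin (n j)) (0 : Fin d)).symm]
    congr 1
    ext a b
    simp [Matrix.toSquareBlockProp, pmMat, Equiv.sigmaSubtype]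
  · intro i hi j hj
    have : i ≠ j := by rintro rfl; exact hi hj
    simp [pmMat, hi, this]

/-- block sizes -/
def fb {d : ℕ} {n : Fin d → ℕ} (S : Finset (Σ j : Fin d, Fin (n j))) (j : Fin d) : ℕ :=
  (univ.filter fun a : Fin (n j) => (⟨j, a⟩ : Σ j : Fin d, Fin (n j)) ∈ S).card

lemma pm_map {ι R R' : Type*} [Fintype ι] [DecidableEq ι] [CommRing R] [CommRing R']
    (f : R →+* R') (M : Matrix ι ι R) (S : Finset ι) : pm (M.map f) S = f (pm M S) := by
  rw [pm, pm, RingHom.map_det]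
  congr 1
  ext a b
  simp only [pmMat, Matrix.of_apply, RingHom.mapMatrix_apply, Matrix.map_apply]
  split_ifs <;> simp

/-- block sign -/
def bs (K : Type) [CommRing K] {d : ℕ} [NeZero d] (j : Fin d) : K := if j = 0 then 1 else -1

lemma bs_sq (K : Type) [CommRing K] {d : ℕ} [NeZero d] (j : Fin d) : bs K j * bs K j = 1 := by
  unfold bs; split_ifs <;> simp

open Polynomial in
lemma link {K : Type} [CommRing K] {d : ℕ} [NeZero d] {n : Fin d → ℕ}
    (A : ∀ j : Fin d, Matrix (Fin (n j)) (Fin (n (j + 1))) K) :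
    detXIplus (cycProd A) = ∑ S : Finset (Σ j : Fin d, Fin (n j)),
      C ((∏ j, bs K j ^ fb S j) * pm (bigT A) S) * X ^ (n 0 - fb S 0) := by
  have h1 := link_abs (R := K[X]) (fun x : (Σ j : Fin d, Fin (n j)) => x.1) ((bigT A).map C) (by
    intro x y hxy
    simp [bigT, hxy]) X
  rw [det_diag_add, pm_block] at h1
  have h2 : detXIplus (cycProd A) = Matrix.det (Matrix.of fun a b : Fin (n 0) =>
      ((((bigT A).map C ^ d + Matrix.diagonal (fun _ => (X : K[X]))) :
        Matrix (Σ j : Fin d, Fin (n j)) (Σ j : Fin d, Fin (n j)) K[X]) ⟨0, a⟩ ⟨0, b⟩)) := by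
    rw [detXIplus]
    congr 1
    ext1 a b
    have : (bigT A).map (C : K →+* K[X]) ^ d = ((bigT A) ^ d).map C :=
      (map_pow (C : K →+* K[X]).mapMatrix (bigT A) d).symm
    rw [Matrix.of_apply, Matrix.add_apply, Matrix.add_apply, this, Matrix.map_apply,
      Matrix.map_apply, cycProd_eq, add_comm]
    simp [Matrix.one_apply, Matrix.diagonal_apply]
  rw [← h2] at h1
  have h3 : (∏ x : (Σ j : Fin d, Fin (n j)), if x.1 = 0 then 1 else (-1 : K[X])) =
      C (∏ x : (Σ j : Fin d, Fin (n j)), bs K x.1) := by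
    rw [map_prod]
    refine Finset.prod_congr rfl fun x _ => ?_
    unfold bs; split_ifs <;> simp
  rw [h3] at h1
  have hsq : (∏ x : (Σ j : Fin d, Fin (n j)), bs K x.1) * (∏ x : (Σ j : Fin d, Fin (n j)), bs K x.1) = 1 := by
    rw [← Finset.prod_mul_distrib]; simp [bs_sq]
  have h4 := congrArg (fun z => C (∏ x : (Σ j : Fin d, Fin (n j)), bs K x.1) * z) h1
  simp only [← mul_assoc] at h4
  rw [← C_mul, hsq, C_1, one_mul] at h4
  rw [← h4, Finset.mul_sum]
  refine Finset.sum_congr rfl fun S _ => ?_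
  rw [pm_map, C_mul, ← mul_assoc, mul_right_comm (C (∏ j, bs K j ^ fb S j))]
  congr 1
  rw [map_prod, ← Finset.prod_mul_distrib, Fintype.prod_sigma, map_prod]
  have h5 : ∀ j, ∏ a : Fin (n j), (C (bs K j) * if (⟨j, a⟩ : Σ j : Fin d, Fin (n j)) ∈ S then 1 else
      if j = 0 then X else (-1 : K[X])) = C (bs K j ^ fb S j) * if j = 0 then X ^ (n 0 - fb S 0) else 1 := by
    intro j
    have e : ∀ a : Fin (n j), (C (bs K j) * if (⟨j, a⟩ : Σ j : Fin d, Fin (n j)) ∈ S then 1 else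
      if j = 0 then X else (-1 : K[X])) = if (⟨j, a⟩ : Σ j : Fin d, Fin (n j)) ∈ S then C (bs K j) else
        if j = 0 then X else 1 := by
      intro a
      unfold bs
      split_ifs <;> simp
    rw [Finset.prod_congr rfl (fun a _ => e a), Finset.prod_ite, Finset.prod_const, Finset.prod_const]
    rw [C_pow]
    congr 1
    by_cases hj : j = 0
    · subst hj
      simp only [if_true]
      congr 1
      rw [Finset.filter_not, Finset.card_sdiff_of_subset (Finset.filter_subset _ _)]
      simp [fb]
    · simp [hj]
  refine (Finset.prod_congr rfl fun j _ => h5 j).trans ?_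
  rw [Finset.prod_mul_distrib]
  simp

lemma cyc_const {d : ℕ} [NeZero d] (f : Fin d → ℕ) (h : ∀ j, f j ≤ f (j + 1)) (j : Fin d) :
    f j = f 0 := by
  have h1 : ∑ j, f j = ∑ j, f (j + 1) := (Equiv.sum_comp (Equiv.addRight (1 : Fin d)) f).symm
  have h2 := (Finset.sum_eq_sum_iff_of_le (fun j _ => h j)).1 h1
  have h3 : ∀ m : ℕ, ∀ hm : m < d, f ⟨m, hm⟩ = f 0 := by
    intro m
    induction m with
    | zero => intro hm; rfl
    | succ m ih =>
      intro hm
      rw [← ih (by omega), h2 ⟨m, by omega⟩ (Finset.mem_univ _)]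
      congr 1
      apply Fin.ext
      rw [Fin.val_add, Fin.val_one', Nat.add_mod_mod, Nat.mod_eq_of_lt hm]
  exact h3 j.1 j.2

lemma fb_eq {d : ℕ} {n : Fin d → ℕ} (S : Finset (Σ j : Fin d, Fin (n j))) (j : Fin d) :
    fb S j = (S.filter fun x => x.1 = j).card := by
  unfold fb
  refine Finset.card_bij (fun a _ => ⟨j, a⟩) ?_ ?_ ?_
  · intro a ha; simpa using ha
  · intro a _ b _ h; simpa using h
  · rintro ⟨l, a⟩ h
    simp at h
    obtain ⟨h1, rfl⟩ := h
    exact ⟨a, by simpa using h1, rfl⟩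

lemma pm_bigT_zero {K : Type} [CommRing K] {d : ℕ} [NeZero d] {n : Fin d → ℕ}
    (A : ∀ j : Fin d, Matrix (Fin (n j)) (Fin (n (j + 1))) K)
    (S : Finset (Σ j : Fin d, Fin (n j))) (h : ¬ ∀ j, fb S j = fb S 0) : pm (bigT A) S = 0 := by
  rw [pm, ← Matrix.det_transpose, Matrix.det_apply']
  refine Finset.sum_eq_zero fun σ _ => ?_
  by_cases hσ : ∀ x ∈ S, σ x ∈ S ∧ (σ x).1 = x.1 + 1
  · exfalso
    apply h
    apply cyc_const
    intro j
    rw [fb_eq, fb_eq]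
    refine Finset.card_le_card_of_injOn σ ?_ (σ.injective.injOn)
    intro x hx
    simp at hx
    have := hσ x hx.1
    simp [this.1, this.2, hx.2]
  · push Not at hσ
    obtain ⟨x, hx, h2⟩ := hσ
    rw [Finset.prod_eq_zero (Finset.mem_univ x), mul_zero]
    by_cases h3 : σ x ∈ S
    · simp [pmMat, hx, bigT, h2 h3]
    · simp [pmMat, hx, h3]

/-- Sum of balanced principal minors. -/
def ck {K : Type} [CommRing K] {d : ℕ} [NeZero d] {n : Fin d → ℕ}
    (A : ∀ j : Fin d, Matrix (Fin (n j)) (Fin (n (j + 1))) K) (k : ℕ) : K :=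
  ∑ S ∈ univ.filter (fun S : Finset (Σ j : Fin d, Fin (n j)) => ∀ j, fb S j = k), pm (bigT A) S

open Polynomial in
lemma coeff_detXI {K : Type} [CommRing K] {d : ℕ} [NeZero d] {n : Fin d → ℕ}
    (A : ∀ j : Fin d, Matrix (Fin (n j)) (Fin (n (j + 1))) K) (k : ℕ) (hk : k ≤ n 0) :
    (detXIplus (cycProd A)).coeff (n 0 - k) = (∏ j : Fin d, bs K j) ^ k * ck A k := by
  rw [link, finsetSum_coeff, ck, Finset.mul_sum, Finset.sum_filter]
  refine Finset.sum_congr rfl fun S _ => ?_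
  have hS : fb S 0 ≤ n 0 := (Finset.card_filter_le _ _).trans (by simp)
  rw [coeff_C_mul, coeff_X_pow]
  by_cases hc : ∀ j, fb S j = fb S 0
  · by_cases h0 : fb S 0 = k
    · have : ∀ j, fb S j = k := fun j => (hc j).trans h0
      simp [this, Finset.prod_pow]
    · rw [if_neg (by omega), if_neg (fun h => h0 (h 0)), mul_zero]
  · rw [pm_bigT_zero A S hc]
    simp

lemma coeff_hyp {K : Type} [CommRing K] (N k : ℕ) (hk : k ≤ N) (p : ℕ → K) :
    (∑ i ∈ Finset.range (N + 1), Polynomial.C (p i) * Polynomial.X ^ (N - i)).coeff (N - k)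
      = p k := by
  rw [Polynomial.finsetSum_coeff, Finset.sum_eq_single_of_mem k (by simp; omega)]
  · simp
  · intro i hi hne
    simp at hi
    rw [Polynomial.coeff_C_mul, Polynomial.coeff_X_pow, if_neg (by omega), mul_zero]

lemma signed_perm_entry {K : Type} [CommRing K] {m p : ℕ} (ε : Fin m → Bool) (δ : Fin p → Bool)
    (π : Equiv.Perm (Fin m)) (ρ : Equiv.Perm (Fin p)) (A : Matrix (Fin m) (Fin p) K)
    (a : Fin m) (b : Fin p) :
    ((signMatrix K ε * π.permMatrix K) * A * (signMatrix K δ * ρ.permMatrix K)⁻¹) a b =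
      sg K (ε a) * A (π a) (ρ b) * sg K (δ b) := by
  have hinv : (signMatrix K δ * ρ.permMatrix K)⁻¹ = (ρ⁻¹).permMatrix K * signMatrix K δ := by
    apply Matrix.inv_eq_right_inv
    have h1 : ρ.permMatrix K * (ρ⁻¹).permMatrix K = 1 := by
      rw [← Matrix.permMatrix_mul]; simp
    have h2 : signMatrix K δ * signMatrix K δ = 1 := by
      rw [signMatrix, Matrix.diagonal_mul_diagonal, ← Matrix.diagonal_one]
      congr 1
      ext i
      split_ifs <;> simp
    calc _ = signMatrix K δ * (ρ.permMatrix K * (ρ⁻¹).permMatrix K) * signMatrix K δ := by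
          simp only [Matrix.mul_assoc]
      _ = 1 := by rw [h1, Matrix.mul_one, h2]
  rw [hinv, ← Matrix.mul_assoc, signMatrix, signMatrix, Matrix.mul_diagonal, Matrix.mul_assoc,
    Matrix.mul_assoc, Matrix.diagonal_mul]
  rw [PEquiv.toMatrix_toPEquiv_mul, PEquiv.mul_toMatrix_toPEquiv]
  simp [sg, Equiv.Perm.inv_def]

lemma bigT_conj {K : Type} [CommRing K] {d : ℕ} [NeZero d] {n : Fin d → ℕ}
    (A D : ∀ j : Fin d, Matrix (Fin (n j)) (Fin (n (j + 1))) K)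
    (ε : ∀ j : Fin d, Fin (n j) → Bool) (π : ∀ j : Fin d, Equiv.Perm (Fin (n j))) :
    bigT (fun j => (signMatrix K (ε j) * (π j).permMatrix K) * A j *
        (signMatrix K (ε (j + 1)) * (π (j + 1)).permMatrix K)⁻¹ + D j) =
      Matrix.of fun x y => sg K (ε x.1 x.2) *
        (Matrix.of fun x y => bigT A (Equiv.sigmaCongrRight π x) (Equiv.sigmaCongrRight π y)) x y *
        sg K (ε y.1 y.2) + bigT D x y := by
  ext ⟨j, a⟩ ⟨l, b⟩
  by_cases h : l = j + 1
  · subst h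
    simp only [bigT, Matrix.of_apply, Matrix.add_apply, signed_perm_entry]
    simp
    rfl
  · simp [bigT, h]

lemma fb_map {d : ℕ} {n : Fin d → ℕ} (π : ∀ j : Fin d, Equiv.Perm (Fin (n j)))
    (S : Finset (Σ j : Fin d, Fin (n j))) (j : Fin d) :
    fb (S.map (Equiv.sigmaCongrRight π).toEmbedding) j = fb S j := by
  rw [fb_eq, fb_eq, Finset.filter_map, Finset.card_map]
  rfl

lemma fb_disj {d : ℕ} {n : Fin d → ℕ} (U W : Finset (Σ j : Fin d, Fin (n j)))
    (h : Disjoint U W) (j : Fin d) : fb (U ∪ W) j = fb U j + fb W j := by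
  rw [fb_eq, fb_eq, fb_eq, Finset.filter_union, Finset.card_union_of_disjoint]
  exact Finset.disjoint_filter_filter h

lemma resum {ι K : Type*} [Fintype ι] [DecidableEq ι] [CommRing K] (P : Finset ι → Prop)
    [DecidablePred P] (f : Finset ι → Finset ι → K) :
    ∑ S ∈ univ.filter P, ∑ U ∈ S.powerset, f U (S \ U) =
      ∑ U, ∑ W, if Disjoint U W ∧ P (U ∪ W) then f U W else 0 := by
  rw [← Finset.sum_product', Finset.univ_product_univ, ← Finset.sum_filter, Finset.sum_sigma']
  refine Finset.sum_bij' (fun x _ => (x.2, x.1 \ x.2)) (fun x _ => ⟨x.1 ∪ x.2, x.1⟩) ?_ ?_ ?_ ?_ ?_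
  · rintro ⟨S, U⟩ h
    simp at h ⊢
    rw [Finset.union_eq_right.2 h.2]
    exact ⟨Finset.disjoint_sdiff, h.1⟩
  · rintro ⟨U, W⟩ h
    simp only [mem_sigma, mem_filter, mem_univ, true_and, mem_powerset] at h ⊢
    exact ⟨h.2, Finset.subset_union_left⟩
  · rintro ⟨S, U⟩ h
    simp at h ⊢
    exact h.2
  · rintro ⟨U, W⟩ h
    simp at h ⊢
    exact Finset.union_sdiff_cancel_left h.1
  · rintro ⟨S, U⟩ h
    rfl

lemma card_fam {d : ℕ} {n : Fin d → ℕ} (V W : Finset (Σ j : Fin d, Fin (n j))) (i k : ℕ)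
    (hik : i ≤ k) (hk : ∀ j, k ≤ n j) (hV : ∀ j, fb V j = i) (hW : ∀ j, fb W j = k - i) :
    (univ.filter fun π : (∀ j : Fin d, Equiv.Perm (Fin (n j))) =>
      ∀ w ∈ W, Equiv.sigmaCongrRight π w ∉ V).card =
      ∏ j, ((n j - k + i).factorial * (n j - i).factorial / (n j - k).factorial) := by
  have h1 : (univ.filter fun π : (∀ j : Fin d, Equiv.Perm (Fin (n j))) =>
      ∀ w ∈ W, Equiv.sigmaCongrRight π w ∉ V) =
      Fintype.piFinset (fun j => univ.filter fun π : Equiv.Perm (Fin (n j)) =>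
        ∀ w ∈ (univ.filter fun a : Fin (n j) => (⟨j, a⟩ : Σ j : Fin d, Fin (n j)) ∈ W),
          π w ∉ (univ.filter fun a : Fin (n j) => (⟨j, a⟩ : Σ j : Fin d, Fin (n j)) ∈ V)) := by
    ext π
    simp [Sigma.forall]
  rw [h1, Fintype.card_piFinset]
  refine Finset.prod_congr rfl fun j _ => ?_
  have e1 : (univ.filter fun a : Fin (n j) => (⟨j, a⟩ : Σ j : Fin d, Fin (n j)) ∈ V).card = i := hV j
  have e2 : (univ.filter fun a : Fin (n j) => (⟨j, a⟩ : Σ j : Fin d, Fin (n j)) ∈ W).card = k - i :=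
    hW j
  have hkj := hk j
  have h2 := perm_count (univ.filter fun a : Fin (n j) => (⟨j, a⟩ : Σ j : Fin d, Fin (n j)) ∈ V)
    (univ.filter fun a : Fin (n j) => (⟨j, a⟩ : Σ j : Fin d, Fin (n j)) ∈ W)
    (by rw [e1, e2, Fintype.card_fin]; omega)
  rw [e1, e2, Fintype.card_fin, show n j - i - (k - i) = n j - k by omega,
    show n j - (k - i) = n j - k + i by omega] at h2
  symm
  apply Nat.div_eq_of_eq_mul_left (Nat.factorial_pos _)
  refine Eq.trans (h2.trans (mul_comm _ _)).symm ?_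
  congr!

lemma comb {K : Type} [CommRing K] {d : ℕ} [NeZero d] {n : Fin d → ℕ} (k : ℕ)
    (hk : ∀ j, k ≤ n j) (f g : Finset (Σ j : Fin d, Fin (n j)) → K)
    (hf : ∀ V, (¬ ∀ j, fb V j = fb V 0) → f V = 0) :
    ∑ π : (∀ j : Fin d, Equiv.Perm (Fin (n j))),
      ∑ S ∈ univ.filter (fun S : Finset (Σ j : Fin d, Fin (n j)) => ∀ j, fb S j = k),
        ∑ U ∈ S.powerset, f (U.map (Equiv.sigmaCongrRight π).toEmbedding) * g (S \ U) =
    ∑ i ∈ range (k + 1), ((∏ j : Fin d,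
          (((n j - k + i).factorial * (n j - i).factorial / (n j - k).factorial : ℕ) : K)) *
        (∑ V ∈ univ.filter (fun S : Finset (Σ j : Fin d, Fin (n j)) => ∀ j, fb S j = i), f V) *
        (∑ W ∈ univ.filter (fun S : Finset (Σ j : Fin d, Fin (n j)) => ∀ j, fb S j = k - i), g W)) := by
  have h1 : ∀ π : (∀ j : Fin d, Equiv.Perm (Fin (n j))),
      ∑ S ∈ univ.filter (fun S : Finset (Σ j : Fin d, Fin (n j)) => ∀ j, fb S j = k),
        ∑ U ∈ S.powerset, f (U.map (Equiv.sigmaCongrRight π).toEmbedding) * g (S \ U) =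
      ∑ V : Finset (Σ j : Fin d, Fin (n j)), ∑ W : Finset (Σ j : Fin d, Fin (n j)),
        if (∀ w ∈ W, Equiv.sigmaCongrRight π w ∉ V) ∧ (∀ j, fb V j + fb W j = k)
          then f V * g W else 0 := by
    intro π
    rw [resum (fun S => ∀ j, fb S j = k)
      (fun U W => f (U.map (Equiv.sigmaCongrRight π).toEmbedding) * g W)]
    refine Eq.trans ?_ (Equiv.sum_comp (Equiv.finsetCongr (Equiv.sigmaCongrRight π)) _)
    refine Finset.sum_congr rfl fun U _ => Finset.sum_congr rfl fun W _ => ?_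
    have hd : (∀ w ∈ W, Equiv.sigmaCongrRight π w ∉
        Equiv.finsetCongr (Equiv.sigmaCongrRight π) U) ↔ Disjoint U W := by
      rw [disjoint_comm, Finset.disjoint_left]
      refine forall₂_congr fun w _ => ?_
      rw [Equiv.finsetCongr_apply, Finset.mem_map_equiv, Equiv.symm_apply_apply]
    refine if_congr ?_ rfl rfl
    rw [hd]
    refine and_congr_right fun hdis => forall_congr' fun j => ?_
    rw [fb_disj U W hdis, Equiv.finsetCongr_apply, fb_map]
  rw [Finset.sum_congr rfl fun π _ => h1 π, Finset.sum_comm]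
  have h2 : ∀ i, ((∏ j : Fin d,
          (((n j - k + i).factorial * (n j - i).factorial / (n j - k).factorial : ℕ) : K)) *
        (∑ V ∈ univ.filter (fun S : Finset (Σ j : Fin d, Fin (n j)) => ∀ j, fb S j = i), f V) *
        (∑ W ∈ univ.filter (fun S : Finset (Σ j : Fin d, Fin (n j)) => ∀ j, fb S j = k - i), g W)) =
      ∑ V : Finset (Σ j : Fin d, Fin (n j)), ∑ W : Finset (Σ j : Fin d, Fin (n j)),
        if (∀ j, fb V j = i) ∧ (∀ j, fb W j = k - i) then (∏ j : Fin d,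
          (((n j - k + i).factorial * (n j - i).factorial / (n j - k).factorial : ℕ) : K)) *
            (f V * g W) else 0 := by
    intro i
    rw [Finset.sum_filter, Finset.sum_filter, mul_assoc, Finset.sum_mul_sum, Finset.mul_sum]
    refine Finset.sum_congr rfl fun V _ => ?_
    rw [Finset.mul_sum]
    refine Finset.sum_congr rfl fun W _ => ?_
    by_cases hV : ∀ j, fb V j = i
    · by_cases hW : ∀ j, fb W j = k - i
      · rw [if_pos hV, if_pos hW, if_pos ⟨hV, hW⟩]
      · rw [if_neg hW, if_neg (not_and_of_not_right _ hW)]; simp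
    · rw [if_neg hV, if_neg (not_and_of_not_left _ hV)]; simp
  rw [Finset.sum_congr rfl fun i _ => h2 i, Finset.sum_comm (s := range (k + 1))]
  refine Finset.sum_congr rfl fun V _ => ?_
  rw [Finset.sum_comm, Finset.sum_comm (s := range (k + 1))]
  refine Finset.sum_congr rfl fun W _ => ?_
  by_cases hV : ∀ j, fb V j = fb V 0
  · by_cases hW : ∀ j, fb V j + fb W j = k
    · have hle : fb V 0 ≤ k := by have := hW 0; omega
      have hW' : ∀ j, fb W j = k - fb V 0 := by
        intro j; have := hW j; have := hV j; omega
      rw [Finset.sum_eq_single_of_mem (fb V 0) (by simp; omega), if_pos ⟨hV, hW'⟩]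
      · have : ∀ π : (∀ j : Fin d, Equiv.Perm (Fin (n j))),
            (if (∀ w ∈ W, Equiv.sigmaCongrRight π w ∉ V) ∧ (∀ j, fb V j + fb W j = k)
              then f V * g W else 0) =
            (if (∀ w ∈ W, Equiv.sigmaCongrRight π w ∉ V) then f V * g W else 0) := by
          intro π
          exact if_congr (and_iff_left hW) rfl rfl
        rw [Finset.sum_congr rfl fun π _ => this π, ← Finset.sum_filter, Finset.sum_const,
          card_fam V W (fb V 0) k hle hk hV hW', nsmul_eq_mul, Nat.cast_prod]
      · intro i _ hi
        exact if_neg (fun h => hi (h.1 0).symm)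
    · rw [Finset.sum_eq_zero, Finset.sum_eq_zero]
      · intro i hi
        simp at hi
        refine if_neg (fun h => hW fun j => ?_)
        have := h.1 j
        have := h.2 j
        omega
      · intro π _
        exact if_neg (fun h => hW h.2)
  · rw [hf V hV]
    simp

lemma main_ck {K : Type} [CommRing K] {d : ℕ} [NeZero d] {n : Fin d → ℕ}
    (A D : ∀ j : Fin d, Matrix (Fin (n j)) (Fin (n (j + 1))) K) (k : ℕ) (hk : ∀ j, k ≤ n j) :
    (∑ ε : (∀ j : Fin d, Fin (n j) → Bool), ∑ π : (∀ j : Fin d, Equiv.Perm (Fin (n j))),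
      ck (fun j => (signMatrix K (ε j) * (π j).permMatrix K) * A j *
        (signMatrix K (ε (j + 1)) * (π (j + 1)).permMatrix K)⁻¹ + D j) k) =
    (1 + 1 : K) ^ (∑ j : Fin d, n j) * ∑ i ∈ range (k + 1), ((∏ j : Fin d,
          (((n j - k + i).factorial * (n j - i).factorial / (n j - k).factorial : ℕ) : K)) *
        ck A i * ck D (k - i)) := by
  rw [Finset.sum_comm]
  simp only [ck]
  rw [← comb k hk (pm (bigT A)) (pm (bigT D)) (fun V hV => pm_bigT_zero A V hV), Finset.mul_sum]
  refine Finset.sum_congr rfl fun π _ => ?_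
  rw [Finset.sum_comm, Finset.mul_sum]
  refine Finset.sum_congr rfl fun S _ => ?_
  have h := sign_avg (Matrix.of fun x y =>
    bigT A (Equiv.sigmaCongrRight π x) (Equiv.sigmaCongrRight π y)) (bigT D) S
  simp only [pm_perm] at h
  rw [Fintype.card_sigma] at h
  simp only [Fintype.card_fin] at h
  rw [← h, ← Equiv.sum_comp (Equiv.piCurry (fun (j : Fin d) (_ : Fin (n j)) => Bool))]
  refine Finset.sum_congr rfl fun ε _ => ?_
  rw [bigT_conj]
  rfl

theorem stmt_8 {K : Type} [CommRing K] (d : ℕ) [NeZero d] (n : Fin d → ℕ)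
    (A D : ∀ j : Fin d, Matrix (Fin (n j)) (Fin (n (j + 1))) K)
    (pp qq rr : ℕ → K)
    (hp : detXIplus (cycProd A) =
      ∑ i ∈ Finset.range (n 0 + 1), Polynomial.C (pp i) * Polynomial.X ^ (n 0 - i))
    (hq : detXIplus (cycProd D) =
      ∑ i ∈ Finset.range (n 0 + 1), Polynomial.C (qq i) * Polynomial.X ^ (n 0 - i))
    (hr : (∑ ε : (∀ j : Fin d, Fin (n j) → Bool),
            ∑ π : (∀ j : Fin d, Equiv.Perm (Fin (n j))),
              detXIplus (cycProd (fun j =>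
                (signMatrix K (ε j) * (π j).permMatrix K) * A j *
                    (signMatrix K (ε (j + 1)) * (π (j + 1)).permMatrix K)⁻¹ + D j))) =
      ∑ i ∈ Finset.range (n 0 + 1), Polynomial.C (rr i) * Polynomial.X ^ (n 0 - i))
    (k : ℕ) (hk : ∀ j, k ≤ n j) :
    rr k = (1 + 1 : K) ^ (∑ j : Fin d, n j) *
      ∑ i ∈ Finset.range (k + 1),
        (∏ j : Fin d,
          (((n j - k + i).factorial * (n j - i).factorial / (n j - k).factorial : ℕ) : K)) *
          pp i * qq (k - i) := by

  have hk0 := hk 0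
  have hpp : ∀ i, i ≤ n 0 → pp i = (∏ j : Fin d, bs K j) ^ i * ck A i := by
    intro i hi
    rw [← coeff_hyp (n 0) i hi pp, ← hp, coeff_detXI A i hi]
  have hqq : ∀ i, i ≤ n 0 → qq i = (∏ j : Fin d, bs K j) ^ i * ck D i := by
    intro i hi
    rw [← coeff_hyp (n 0) i hi qq, ← hq, coeff_detXI D i hi]
  rw [← coeff_hyp (n 0) k hk0 rr, ← hr]
  simp only [Polynomial.finsetSum_coeff, coeff_detXI _ k hk0, ← Finset.mul_sum]
  rw [main_ck A D k hk, mul_left_comm, Finset.mul_sum]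
  congr 1
  refine Finset.sum_congr rfl fun i hi => ?_
  have hik : i ≤ k := by simpa [Nat.lt_succ_iff] using hi
  rw [hpp i (by omega), hqq (k - i) (by omega)]
  have : (∏ j : Fin d, bs K j) ^ k = (∏ j : Fin d, bs K j) ^ i * (∏ j : Fin d, bs K j) ^ (k - i) := by
    rw [← pow_add]; congr 1; omega
  rw [this]
  ring
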